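/- Both first-level projections of the level-one stabilizer of the first Grigorchuk group are all of Γ: for every g ∈ Γ there exists h₀ ∈ Γ with h₀ (false :: w) = false :: g w for all w : List Bool, and there exists h₁ ∈ Γ with h₁ (true :: w) = true :: g w for all w : List Bool. -/

import Mathlib

/-!
Write `b = (a, c)`, `c = (a, d)`, `d = (1, b)` for the actions on the two subtrees. Below `true`,
the elements `d`, `b`, `c` act as `b`, `c`, `d`, and `a * b * a = (c, a)` acts as `a`; hence the
projection of the level-one stabilizer to the subtree below `true` hits every generator of `Γ`, and
so is onto. Conjugation by `a` swaps the two subtrees, which gives the projection below `false`.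
-/

namespace Grigorchuk

/-- Underlying map of the Grigorchuk generator `a`: flip the first letter. -/
def aF : List Bool → List Bool
  | [] => []
  | x :: w => (!x) :: w

mutual
  /-- Underlying map of the Grigorchuk generator `b`. -/
  def bF : List Bool → List Bool
    | [] => []
    | false :: w => false :: aF w
    | true :: w => true :: cF w
  /-- Underlying map of the Grigorchuk generator `c`. -/
  def cF : List Bool → List Bool
    | [] => []
    | false :: w => false :: aF w
    | true :: w => true :: dF w
  /-- Underlying map of the Grigorchuk generator `d`. -/
  def dF : List Bool → List Bool
    | [] => []
    | false :: w => false :: w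
    | true :: w => true :: bF w
end

theorem aF_aF : ∀ w : List Bool, aF (aF w) = w := by
  intro w
  cases w with
  | nil => rfl
  | cons x w => simp [aF]

theorem bcd_invol : ∀ w : List Bool,
    bF (bF w) = w ∧ cF (cF w) = w ∧ dF (dF w) = w := by
  intro w
  induction w with
  | nil => simp [bF, cF, dF]
  | cons x w ih =>
    cases x <;> simp [bF, cF, dF, aF_aF, ih.1, ih.2.1, ih.2.2]

/-- The Grigorchuk generator `a` as a permutation of `List Bool`. -/
def a : Equiv.Perm (List Bool) := ⟨aF, aF, aF_aF, aF_aF⟩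

/-- The Grigorchuk generator `b` as a permutation of `List Bool`. -/
def b : Equiv.Perm (List Bool) :=
  ⟨bF, bF, fun w => (bcd_invol w).1, fun w => (bcd_invol w).1⟩

/-- The Grigorchuk generator `c` as a permutation of `List Bool`. -/
def c : Equiv.Perm (List Bool) :=
  ⟨cF, cF, fun w => (bcd_invol w).2.1, fun w => (bcd_invol w).2.1⟩

/-- The Grigorchuk generator `d` as a permutation of `List Bool`. -/
def d : Equiv.Perm (List Bool) :=
  ⟨dF, dF, fun w => (bcd_invol w).2.2, fun w => (bcd_invol w).2.2⟩

/-- Underlying map of the pair `(g, h)` acting on the two subtrees. -/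
def pairF (g h : List Bool → List Bool) : List Bool → List Bool
  | [] => []
  | false :: w => false :: g w
  | true :: w => true :: h w

/-- The permutation of `List Bool` acting as `g` on the subtree below `false`
and as `h` on the subtree below `true`, fixing the root. -/
def pair (g h : Equiv.Perm (List Bool)) : Equiv.Perm (List Bool) :=
  ⟨pairF g h, pairF g.symm h.symm,
    fun w => by cases w with
      | nil => rfl
      | cons x w => cases x <;> simp [pairF],
    fun w => by cases w with
      | nil => rfl
      | cons x w => cases x <;> simp [pairF]⟩

/-- The first Grigorchuk group: the subgroup of `Equiv.Perm (List Bool)`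
generated by `a`, `b`, `c`, `d`. -/
def Γ : Subgroup (Equiv.Perm (List Bool)) := Subgroup.closure {a, b, c, d}

/-- The normal closure in `Γ` of the element `(a * b)^2`, realized as the subgroup
of `Equiv.Perm (List Bool)` generated by all `Γ`-conjugates of `(a * b)^2`. -/
def K : Subgroup (Equiv.Perm (List Bool)) :=
  Subgroup.closure {g | ∃ x ∈ Γ, g = x * (a * b) ^ 2 * x⁻¹}

end Grigorchuk

namespace Grigorchuk

theorem exists_lift_true (g : Equiv.Perm (List Bool)) (hg : g ∈ Γ) :
    ∃ h ∈ Γ, ∀ w : List Bool, h (true :: w) = true :: g w := by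
  have ha : a ∈ Γ := Subgroup.subset_closure (by simp)
  have hb : b ∈ Γ := Subgroup.subset_closure (by simp)
  have hc : c ∈ Γ := Subgroup.subset_closure (by simp)
  have hd : d ∈ Γ := Subgroup.subset_closure (by simp)
  induction hg using Subgroup.closure_induction with
  | mem x hx =>
    rcases hx with rfl | rfl | rfl | rfl
    · exact ⟨a * b * a, mul_mem (mul_mem ha hb) ha, fun w => by
        simp [a, b, aF, bF]⟩
    · exact ⟨d, hd, fun w => by simp [b, d, dF]⟩
    · exact ⟨b, hb, fun w => by simp [b, c, bF]⟩
    · exact ⟨c, hc, fun w => by simp [c, d, cF]⟩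
  | one => exact ⟨1, one_mem _, fun w => rfl⟩
  | mul x y _ _ ihx ihy =>
    obtain ⟨h, hh, hx⟩ := ihx
    obtain ⟨k, hk, hy⟩ := ihy
    exact ⟨h * k, mul_mem hh hk, fun w => by simp [hx, hy]⟩
  | inv x _ ihx =>
    obtain ⟨h, hh, hx⟩ := ihx
    exact ⟨h⁻¹, inv_mem hh, fun w => by rw [Equiv.Perm.inv_eq_iff_eq, hx]; simp⟩

end Grigorchuk

open Grigorchuk in
/-- Both first-level projections of the level-one stabilizer of the first
Grigorchuk group are all of `Γ`. -/
theorem grigorchuk_level_one_projections (g : Equiv.Perm (List Bool)) (hg : g ∈ Γ) :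
    (∃ h₀ ∈ Γ, ∀ w : List Bool, h₀ (false :: w) = false :: g w) ∧
      (∃ h₁ ∈ Γ, ∀ w : List Bool, h₁ (true :: w) = true :: g w) := by
  obtain ⟨h, hh, hw⟩ := exists_lift_true g hg
  have ha : a ∈ Γ := Subgroup.subset_closure (by simp)
  refine ⟨⟨a * h * a, mul_mem (mul_mem ha hh) ha, fun w => ?_⟩, h, hh, hw⟩
  have h₁ : a (false :: w) = true :: w := rfl
  have h₂ : a (true :: g w) = false :: g w := rfl
  rw [Equiv.Perm.mul_apply, Equiv.Perm.mul_apply, h₁, hw, h₂]
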